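/- Given a symmetric Kripke model N = (W, R, V) and its translation N^ρ = (W, Ag ∪ {b}, E, C, ν) (where b ∉ Ag, E(s,t) = { a ∈ Ag | (s,t) ∈ R(a) }, C(a) = {a}, and ν(s) = { p ∈ Prop | s ∈ V(p) }): for every formula φ of the language ELCD (with modalities K_a, C_G, D_G but not F_G) and every state s ∈ W, N,s ⊩ φ under Kripke semantics if and only if N^ρ,s ⊨ φ under similarity-model semantics. -/

import Mathlib

/-- Formulas of the language ELCD (modalities `K_a`, `C_G`, `D_G`, but no
`F_G`) over a set `Ag` of agents, with propositional variables drawn from the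
countably infinite set `ℕ`.  Groups are nonempty finite sets of agents. -/
inductive Formula (Ag : Type) : Type
  | atom : ℕ → Formula Ag
  | neg  : Formula Ag → Formula Ag
  | impl : Formula Ag → Formula Ag → Formula Ag
  | K    : Ag → Formula Ag → Formula Ag
  | C    : (G : Finset Ag) → G.Nonempty → Formula Ag → Formula Ag
  | D    : (G : Finset Ag) → G.Nonempty → Formula Ag → Formula Ag

/-- A similarity model `(W, A, E, C, ν)`. -/
structure SimModel (Ag : Type) where
  W : Type
  A : Type
  w_nonempty : Nonempty W
  E : W → W → Set A
  Cap : Ag → Set A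
  val : W → Set ℕ
  positivity : ∀ s t : W, E s t = Set.univ → s = t
  symmetry : ∀ s t : W, E s t = E t s

/-- Satisfaction on similarity models (common knowledge via chains of
`G`-edges, equivalently `E_G^n` for every positive `n`). -/
def SimModel.sat {Ag : Type} (M : SimModel Ag) : M.W → Formula Ag → Prop
  | s, .atom p => p ∈ M.val s
  | s, .neg φ => ¬ M.sat s φ
  | s, .impl φ ψ => M.sat s φ → M.sat s ψ
  | s, .K a φ => ∀ t, M.Cap a ⊆ M.E s t → M.sat t φ
  | s, .C G _ φ =>
      ∀ t, Relation.TransGen (fun u v => ∃ a ∈ G, M.Cap a ⊆ M.E u v) s t → M.sat t φ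
  | s, .D G _ φ => ∀ t, (⋃ a ∈ G, M.Cap a) ⊆ M.E s t → M.sat t φ

/-- A Kripke model `(W, R, V)`. -/
structure KripkeModel (Ag : Type) where
  W : Type
  w_nonempty : Nonempty W
  R : Ag → W → W → Prop
  V : ℕ → Set W

/-- Kripke satisfaction `N,s ⊩ φ` (common knowledge via chains of `G`-steps,
equivalently `E_G^n` for every positive `n`; distributed knowledge via the
intersection `⋂_{a∈G} R(a)`). -/
def KripkeModel.sat {Ag : Type} (N : KripkeModel Ag) : N.W → Formula Ag → Prop
  | s, .atom p => s ∈ N.V p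
  | s, .neg φ => ¬ N.sat s φ
  | s, .impl φ ψ => N.sat s φ → N.sat s ψ
  | s, .K a φ => ∀ t, N.R a s t → N.sat t φ
  | s, .C G _ φ =>
      ∀ t, Relation.TransGen (fun u v => ∃ a ∈ G, N.R a u v) s t → N.sat t φ
  | s, .D G _ φ => ∀ t, (∀ a ∈ G, N.R a s t) → N.sat t φ

/-- The translation `N^ρ` of a symmetric Kripke model `N`: the abilities are
`Ag ∪ {b}` for a new agent `b` (rendered as `Ag ⊕ Unit`),
`E(s,t) = { a ∈ Ag ∣ (s,t) ∈ R(a) }`, `C(a) = {a}`, and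
`ν(s) = { p ∣ s ∈ V(p) }`. -/
def kripkeToSim {Ag : Type} (N : KripkeModel Ag) (hsym : ∀ a : Ag, Symmetric (N.R a)) :
    SimModel Ag where
  W := N.W
  A := Ag ⊕ Unit
  w_nonempty := N.w_nonempty
  E s t := Sum.inl '' { a : Ag | N.R a s t }
  Cap a := {Sum.inl a}
  val s := { p : ℕ | s ∈ N.V p }
  positivity := by
    intro s t h
    exfalso
    have hmem : (Sum.inr () : Ag ⊕ Unit) ∈ Sum.inl '' { a : Ag | N.R a s t } := by
      have h' : Sum.inl '' { a : Ag | N.R a s t } = (Set.univ : Set (Ag ⊕ Unit)) := h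
      rw [h']; exact Set.mem_univ _
    rcases hmem with ⟨a, _, ha⟩
    exact Sum.inl_ne_inr ha
  symmetry := by
    intro s t
    ext x
    constructor <;> rintro ⟨a, ha, rfl⟩ <;> exact ⟨a, hsym a ha, rfl⟩

/-!
A similarity model `M` has an underlying Kripke model with `R(a) = {(s,t) | C(a) ⊆ E(s,t)}`, and
`M` satisfies the same formulas as this model: only distributed knowledge differs in form, and
there `⋃_{a∈G} C(a) ⊆ E(s,t)` says exactly that `(s,t)` lies in `⋂_{a∈G} R(a)`. Since `C(a) = {a}`
in `N^ρ`, the Kripke model underlying `N^ρ` is `N` itself.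
-/

theorem KripkeModel.sat_congr {Ag : Type} {N₁ N₂ : KripkeModel Ag} (hN : N₁ = N₂)
    {s₁ : N₁.W} {s₂ : N₂.W} (hs : s₁ ≍ s₂) (φ : Formula Ag) : N₁.sat s₁ φ ↔ N₂.sat s₂ φ := by
  subst hN
  rw [eq_of_heq hs]

namespace SimModel

variable {Ag : Type}

/-- The Kripke model underlying a similarity model: `t` is accessible from `s` for the agent `a`
when `s` and `t` are similar in all abilities of `a`, i.e. `C(a) ⊆ E(s,t)`. It interprets
similarity semantics as Kripke semantics. -/
def toKripke (M : SimModel Ag) : KripkeModel Ag where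
  W := M.W
  w_nonempty := M.w_nonempty
  R a s t := M.Cap a ⊆ M.E s t
  V p := {s | p ∈ M.val s}

theorem sat_toKripke (M : SimModel Ag) (s : M.W) (φ : Formula Ag) :
    M.toKripke.sat s φ ↔ M.sat s φ := by
  induction φ generalizing s with
  | atom p => exact Iff.rfl
  | neg φ ih => exact not_congr (ih s)
  | impl φ ψ ihφ ihψ => exact imp_congr (ihφ s) (ihψ s)
  | K a φ ih => exact forall₂_congr fun t _ => ih t
  | C G _ φ ih => exact forall₂_congr fun t _ => ih t
  | D G _ φ ih => exact forall_congr' fun t => imp_congr Set.iUnion₂_subset_iff.symm (ih t)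

end SimModel

section Translation

variable {Ag : Type} (N : KripkeModel Ag) (hsym : ∀ a : Ag, Symmetric (N.R a))

theorem cap_subset_E_kripkeToSim_iff (a : Ag) (s t : N.W) :
    (kripkeToSim N hsym).Cap a ⊆ (kripkeToSim N hsym).E s t ↔ N.R a s t :=
  Set.singleton_subset_iff.trans Sum.inl_injective.mem_set_image

theorem toKripke_kripkeToSim : (kripkeToSim N hsym).toKripke = N := by
  have hR : (kripkeToSim N hsym).toKripke.R = N.R := by
    funext a s t
    exact propext (cap_subset_E_kripkeToSim_iff N hsym a s t)
  exact congrArg (fun R => KripkeModel.mk N.W N.w_nonempty R N.V) hR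

theorem stmt_13_general (φ : Formula Ag) (s : N.W) :
    N.sat s φ ↔ (kripkeToSim N hsym).sat s φ :=
  calc N.sat s φ
    _ ↔ (kripkeToSim N hsym).toKripke.sat s φ :=
      KripkeModel.sat_congr (toKripke_kripkeToSim N hsym).symm HEq.rfl φ
    _ ↔ (kripkeToSim N hsym).sat s φ := (kripkeToSim N hsym).sat_toKripke s φ

end Translation

/-- the translation preserves truth: for every ELCD-formula `φ`
and every state `s`, `N,s ⊩ φ` iff `N^ρ,s ⊨ φ`. -/
theorem stmt_13 {Ag : Type} [Fintype Ag] [Nonempty Ag]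
    (N : KripkeModel Ag) (hsym : ∀ a : Ag, Symmetric (N.R a))
    (φ : Formula Ag) (s : N.W) :
    N.sat s φ ↔ (kripkeToSim N hsym).sat s φ :=
  stmt_13_general N hsym φ s
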